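/- arXiv:2311.10103 — 2 statements merged into one kernel-verified Lean document; each statement's English description precedes it below -/
import Mathlib

section
/- Let Φ be a Young function, (Ω, ℳ, μ) a measure space, N ≥ 1 an integer, and c₀ > 0. Suppose g : ℝ^N×Ω×ℝ^N×ℝ^N → ℝ is such that λ ↦ g(x,ω,y,λ) is strictly convex for all x ∈ ℝ^N and (μ⊗Lebesgue)-a.e. (ω,y) ∈ Ω×ℝ^N, and |g(x,ω,y,λ)| ≤ c₀(1 + Φ(|λ|)) for all x, λ ∈ ℝ^N and a.e. (ω,y). Then, with c₀' = 2Nc₀, one has |g(x,ω,y,λ) − g(x,ω,y,ν)| ≤ c₀' · (1 + Φ(2(1+|λ|+|ν|)))/(1+|λ|+|ν|) · |λ−ν| for all x, λ, ν ∈ ℝ^N and (μ⊗Lebesgue)-a.e. (ω,y) ∈ Ω×ℝ^N. -/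
open MeasureTheory Filter Topology ENNReal

noncomputable section

/-- Euclidean norm on `Fin N → ℝ`. -/
def enorm2 {N : ℕ} (v : Fin N → ℝ) : ℝ := Real.sqrt (∑ i, v i ^ 2)

/-- `Φ : [0,∞) → [0,∞)` is a Young function: continuous, convex, positive on `(0,∞)`,
with `Φ(t)/t → 0` as `t → 0⁺` and `Φ(t)/t → ∞` as `t → ∞` (so `Φ(0) = 0`). -/
def IsYoung (Φ : ℝ → ℝ) : Prop :=
  ContinuousOn Φ (Set.Ici 0) ∧ ConvexOn ℝ (Set.Ici 0) Φ ∧ Φ 0 = 0 ∧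
    (∀ t : ℝ, 0 < t → 0 < Φ t) ∧ (∀ t : ℝ, 0 ≤ t → 0 ≤ Φ t) ∧
    Tendsto (fun t => Φ t / t) (nhdsWithin 0 (Set.Ioi 0)) (nhds 0) ∧
    Tendsto (fun t => Φ t / t) atTop atTop

/-- The `Δ₂`-condition (at infinity). -/
def Delta2 (Φ : ℝ → ℝ) : Prop :=
  ∃ α : ℝ, 0 < α ∧ ∃ t₀ : ℝ, 0 ≤ t₀ ∧ ∀ t : ℝ, t₀ ≤ t → Φ (2 * t) ≤ α * Φ t

/-- The `Δ'`-condition (at infinity). -/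
def DeltaPrime (Φ : ℝ → ℝ) : Prop :=
  ∃ k : ℝ, 0 < k ∧ ∃ t₀ s₀ : ℝ, 0 ≤ t₀ ∧ 0 ≤ s₀ ∧
    ∀ t s : ℝ, t₀ ≤ t → s₀ ≤ s → Φ (t * s) ≤ k * Φ t * Φ s

/-- The conjugate Young function `Φ̃(t) = sup_{s ≥ 0} (st − Φ(s))`. -/
def conjY (Φ : ℝ → ℝ) (t : ℝ) : ℝ := sSup ((fun s => s * t - Φ s) '' Set.Ici 0)

/-- The Luxemburg norm `‖u‖_{Φ,X} = inf {δ > 0 : ∫_X Φ(|u|/δ) dν ≤ 1}` (`+∞` if no such `δ`). -/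
def luxNorm {X : Type*} [MeasurableSpace X] (Φ : ℝ → ℝ) (ν : Measure X) (u : X → ℝ) : ℝ≥0∞ :=
  sInf {d : ℝ≥0∞ | ∃ δ : ℝ, 0 < δ ∧ d = ENNReal.ofReal δ ∧
    (∫⁻ x, ENNReal.ofReal (Φ (|u x| / δ)) ∂ν) ≤ 1}

/-- An `N`-dimensional dynamical system on `Ω` preserving `μ`. -/
def IsDynSys {N : ℕ} {Ω : Type*} [MeasurableSpace Ω] (μ : Measure Ω)
    (T : (Fin N → ℝ) → Ω → Ω) : Prop :=
  T 0 = id ∧ (∀ x y : Fin N → ℝ, T (x + y) = T x ∘ T y) ∧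
    (∀ x : Fin N → ℝ, MeasurePreserving (T x) μ μ) ∧
    Measurable fun p : (Fin N → ℝ) × Ω => T p.1 p.2

/-- `ℤ^N`-periodicity. -/
def ZPeriodic {N : ℕ} (g : (Fin N → ℝ) → ℝ) : Prop :=
  ∀ (y : Fin N → ℝ) (k : Fin N → ℤ), g (y + fun i => (k i : ℝ)) = g y

/-- The unit cube `Y = [0,1]^N`. -/
def Ycube (N : ℕ) : Set (Fin N → ℝ) := Set.Icc 0 1

/-- `ℳ` is countably generated modulo `μ`-null sets. -/
def CountGenModNull {Ω : Type*} [MeasurableSpace Ω] (μ : Measure Ω) : Prop :=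
  ∃ S : ℕ → Set Ω, (∀ n, MeasurableSet (S n)) ∧
    ∀ A : Set Ω, MeasurableSet A →
      ∃ B : Set Ω, MeasurableSet[MeasurableSpace.generateFrom (Set.range S)] B ∧
        μ (symmDiff A B) = 0

/-- Weak stochastic two-scale convergence of `(u k)` to `u₀` along the sequence `(ε k)`. -/
def WeakStoch2Scale {N : ℕ} {Ω : Type*} [MeasurableSpace Ω] (μ : Measure Ω)
    (T : (Fin N → ℝ) → Ω → Ω) (Q : Set (Fin N → ℝ)) (ε : ℕ → ℝ)
    (u : ℕ → (Fin N → ℝ) → Ω → ℝ) (u₀ : (Fin N → ℝ) → Ω → (Fin N → ℝ) → ℝ) : Prop :=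
  ∀ φ : (Fin N → ℝ) → ℝ, ContDiff ℝ (⊤ : ℕ∞) φ → HasCompactSupport φ → tsupport φ ⊆ Q →
    ∀ ψ : Ω → ℝ, Measurable ψ → (∃ C : ℝ, ∀ ω, |ψ ω| ≤ C) →
      ∀ g : (Fin N → ℝ) → ℝ, Continuous g → ZPeriodic g →
        Tendsto
          (fun k => ∫ x in Q, (∫ ω, u k x ω * φ x * ψ (T ((ε k)⁻¹ • x) ω) *
              g (((ε k) ^ 2)⁻¹ • x) ∂μ))
          atTop
          (nhds (∫ x in Q, (∫ ω, (∫ y in Ycube N, u₀ x ω y * φ x * ψ ω * g y) ∂μ)))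

/-! A convex function that is bounded by `M` on a ball of radius `2R` is Lipschitz with constant
`2M / R` on the concentric ball of radius `R`. With `R = 1 + ‖u‖ + ‖v‖` both `u` and `v` lie in the
ball of radius `R` about the origin, and an increasing growth bound `Ψ` on the function supplies
`M = Ψ (2R)`. The bound does not depend on the dimension, so it is better than the claimed one by
the factor `N`. -/

theorem monotoneOn_Ici_of_convexOn_of_forall_le {𝕜 : Type*} [Field 𝕜] [LinearOrder 𝕜]
    [IsStrictOrderedRing 𝕜] {β : Type*} [AddCommMonoid β] [LinearOrder β]
    [IsOrderedCancelAddMonoid β] [Module 𝕜 β] [PosSMulStrictMono 𝕜 β] {f : 𝕜 → β} {a : 𝕜}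
    (hf : ConvexOn 𝕜 (Set.Ici a) f) (hmin : ∀ t, a ≤ t → f a ≤ f t) :
    MonotoneOn f (Set.Ici a) := by
  intro s hs t ht hst
  rcases (Set.mem_Ici.1 hs).eq_or_lt with rfl | has
  · exact hmin t ht
  · exact hf.le_right_of_left_le'' Set.self_mem_Ici ht has hst (hmin s hs)

namespace IsYoung

variable {Φ : ℝ → ℝ}

theorem nonneg (hΦ : IsYoung Φ) {t : ℝ} (ht : 0 ≤ t) : 0 ≤ Φ t := by
  obtain ⟨-, -, -, -, hnonneg, -, -⟩ := hΦ
  exact hnonneg t ht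

theorem monotoneOn (hΦ : IsYoung Φ) : MonotoneOn Φ (Set.Ici 0) := by
  obtain ⟨-, hconvex, hzero, -, hnonneg, -, -⟩ := hΦ
  exact monotoneOn_Ici_of_convexOn_of_forall_le hconvex fun t ht ↦ hzero.trans_le (hnonneg t ht)

theorem monotoneOn_const_mul_one_add (hΦ : IsYoung Φ) {c : ℝ} (hc : 0 ≤ c) :
    MonotoneOn (fun t ↦ c * (1 + Φ t)) (Set.Ici 0) := fun _ hs _ ht hst ↦
  mul_le_mul_of_nonneg_left (add_le_add_right (hΦ.monotoneOn hs ht hst) 1) hc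

end IsYoung

theorem enorm2_eq_norm_toLp {N : ℕ} (v : Fin N → ℝ) : enorm2 v = ‖WithLp.toLp 2 v‖ := by
  simp [enorm2, EuclideanSpace.norm_eq]

theorem convexOn_comp_ofLp (p : ℝ≥0∞) {V : Type*} [AddCommGroup V] [Module ℝ V] {f : V → ℝ}
    (hf : ConvexOn ℝ Set.univ f) :
    ConvexOn ℝ Set.univ fun w : WithLp p V ↦ f w.ofLp :=
  hf.comp_linearMap (WithLp.linearEquiv p ℝ V).toLinearMap

section NormedSpace

variable {E : Type*} [NormedAddCommGroup E] [NormedSpace ℝ E]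

theorem abs_sub_le_of_convexOn_ball {f : E → ℝ} {x₀ u v : E} {r ε M : ℝ}
    (hf : ConvexOn ℝ (Metric.ball x₀ r) f) (hε : 0 < ε)
    (hM : ∀ w ∈ Metric.ball x₀ r, |f w| ≤ M)
    (hu : u ∈ Metric.ball x₀ (r - ε)) (hv : v ∈ Metric.ball x₀ (r - ε)) :
    |f u - f v| ≤ 2 * M / ε * ‖u - v‖ := by
  have hM_nonneg : 0 ≤ M :=
    (abs_nonneg _).trans (hM u (Metric.ball_subset_ball (sub_le_self r hε.le) hu))
  have hlip := (hf.lipschitzOnWith_of_abs_le hε hM).dist_le_mul u hu v hv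
  rwa [Real.coe_toNNReal _ (by positivity), Real.dist_eq, dist_eq_norm] at hlip

theorem abs_sub_le_of_convexOn_of_abs_le_comp_norm {f : E → ℝ} {Ψ : ℝ → ℝ}
    (hf : ConvexOn ℝ Set.univ f) (hΨ : MonotoneOn Ψ (Set.Ici 0)) (hbound : ∀ w, |f w| ≤ Ψ ‖w‖)
    (u v : E) :
    |f u - f v| ≤ 2 * Ψ (2 * (1 + ‖u‖ + ‖v‖)) / (1 + ‖u‖ + ‖v‖) * ‖u - v‖ := by
  set R := 1 + ‖u‖ + ‖v‖
  have hR_pos : 0 < R := by positivity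
  have hball : ∀ w ∈ Metric.ball (0 : E) (2 * R), |f w| ≤ Ψ (2 * R) := fun w hw ↦
    (hbound w).trans (hΨ (norm_nonneg w) (by positivity : 0 ≤ 2 * R) (mem_ball_zero_iff.1 hw).le)
  refine abs_sub_le_of_convexOn_ball (hf.subset (Set.subset_univ _) (convex_ball 0 (2 * R)))
    hR_pos hball ?_ ?_
  all_goals
    rw [mem_ball_zero_iff]
    linarith [norm_nonneg u, norm_nonneg v]

theorem stmt0_general {X Y : Type*} [MeasurableSpace Y] {ν : Measure Y} {Ψ : ℝ → ℝ}
    (hΨ : MonotoneOn Ψ (Set.Ici 0)) {g : X → Y → E → ℝ}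
    (hconv : ∀ᵐ y ∂ν, ∀ x, ConvexOn ℝ Set.univ (g x y))
    (hbound : ∀ᵐ y ∂ν, ∀ x w, |g x y w| ≤ Ψ ‖w‖) :
    ∀ᵐ y ∂ν, ∀ x u v,
      |g x y u - g x y v| ≤
        2 * Ψ (2 * (1 + ‖u‖ + ‖v‖)) / (1 + ‖u‖ + ‖v‖) * ‖u - v‖ := by
  filter_upwards [hconv, hbound] with y hconv_y hbound_y x
  exact abs_sub_le_of_convexOn_of_abs_le_comp_norm (hconv_y x) hΨ (hbound_y x)

end NormedSpace

/-- local Lipschitz-type estimate for integrands with nonstandard growth. -/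
theorem stmt0 {N : ℕ} (hN : 1 ≤ N) {Ω : Type*} [MeasurableSpace Ω] (μ : Measure Ω)
    (Φ : ℝ → ℝ) (hΦ : IsYoung Φ) (c₀ : ℝ) (hc₀ : 0 < c₀)
    (g : (Fin N → ℝ) → Ω → (Fin N → ℝ) → (Fin N → ℝ) → ℝ)
    (hconv : ∀ᵐ p ∂(μ.prod (volume : Measure (Fin N → ℝ))),
      ∀ x : Fin N → ℝ, StrictConvexOn ℝ Set.univ (g x p.1 p.2))
    (hbound : ∀ᵐ p ∂(μ.prod (volume : Measure (Fin N → ℝ))),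
      ∀ x lam : Fin N → ℝ, |g x p.1 p.2 lam| ≤ c₀ * (1 + Φ (enorm2 lam))) :
    ∀ᵐ p ∂(μ.prod (volume : Measure (Fin N → ℝ))),
      ∀ x lam nu : Fin N → ℝ,
        |g x p.1 p.2 lam - g x p.1 p.2 nu| ≤
          (2 * (N : ℝ) * c₀) *
            ((1 + Φ (2 * (1 + enorm2 lam + enorm2 nu))) / (1 + enorm2 lam + enorm2 nu)) *
            enorm2 (lam - nu) := by
  have hmain := stmt0_general (hΦ.monotoneOn_const_mul_one_add hc₀.le)
    (hconv.mono fun p hp x ↦ convexOn_comp_ofLp 2 (hp x).convexOn)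
    (hbound.mono fun p hp x w ↦ enorm2_eq_norm_toLp w.ofLp ▸ hp x w.ofLp)
  filter_upwards [hmain] with p hp x lam nu
  simp only [enorm2_eq_norm_toLp, WithLp.toLp_sub]
  set R := 1 + ‖WithLp.toLp 2 lam‖ + ‖WithLp.toLp 2 nu‖
  have hΦ_nonneg : 0 ≤ Φ (2 * R) := hΦ.nonneg (by positivity)
  have hN_cast : (1 : ℝ) ≤ N := by exact_mod_cast hN
  calc
    _ ≤ 2 * (c₀ * (1 + Φ (2 * R))) / R * ‖WithLp.toLp 2 lam - WithLp.toLp 2 nu‖ :=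
      hp x (.toLp 2 lam) (.toLp 2 nu)
    _ = 2 * 1 * c₀ * ((1 + Φ (2 * R)) / R) * ‖WithLp.toLp 2 lam - WithLp.toLp 2 nu‖ := by ring
    _ ≤ 2 * N * c₀ * ((1 + Φ (2 * R)) / R) * ‖WithLp.toLp 2 lam - WithLp.toLp 2 nu‖ := by gcongr
end
end

section
/- Let Φ be a Young function such that Φ and its conjugate Φ̃ are of class Δ₂, and let {T(x)}_{x∈ℝ^N} be an N-dimensional dynamical system on Ω. Let f(x,ω,y) = Σ_{i=1}^m φ_i(x)ψ_i(ω)g_i(y), where φ_i ∈ C_c^∞(Q), ψ_i : Ω → ℝ is bounded measurable, and g_i : ℝ^N → ℝ is continuous and ℤ^N-periodic. For ε > 0 define f_T^ε(x,ω) = f(x, T(x/ε)ω, x/ε²) on Q×Ω. Then lim_{ε→0⁺} ‖f_T^ε‖_{Φ,Q×Ω} = ‖f‖_{Φ,Q×Ω×Y}. -/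
open MeasureTheory Filter Topology ENNReal

noncomputable section

/-!
Since `T` preserves `μ`, integrating over `ω` first removes the scale `ε` altogether: the modular
`∫∫ Φ(|f_T^ε| / δ)` equals `∫ G(x, x / ε²) dx` with `G(x, y) = ∫ Φ(|f(x, ω, y)| / δ) dμ(ω)`.
For `η = ε²`, averaging over the translations `x ↦ x + η z`, `z ∈ Y`, gives
`∫ G(x, x / η) dx = ∫ ∫_Y G(x + η z, x / η + z) dz dx`. Uniform continuity of `G` in its first
variable allows `x + η z` to be replaced by `x`, and periodicity in the second variable then
allows the shift `x / η` to be dropped. So the modulars converge for every `δ > 0`. By convexity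
the modular is strictly below `1` for `δ` above the Luxemburg norm and above `1` for `δ` below it,
so the norms converge as well.
-/

section Modular

variable {X : Type*} [MeasurableSpace X] {Φ : ℝ → ℝ} {ν : Measure X} {u : X → ℝ} {δ δ' : ℝ}

/-- The Orlicz modular of `u / δ`: the Luxemburg norm of `u` is the infimum of the `δ > 0` at which
it is at most `1`. -/
def modular (Φ : ℝ → ℝ) (ν : Measure X) (u : X → ℝ) (δ : ℝ) : ℝ≥0∞ :=
  ∫⁻ x, ENNReal.ofReal (Φ (|u x| / δ)) ∂ν

theorem map_mul_le_mul_map_of_convexOn (hΦ : ConvexOn ℝ (Set.Ici 0) Φ) (hΦ0 : Φ 0 = 0) {c t : ℝ}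
    (hc : 0 ≤ c) (hc1 : c ≤ 1) (ht : 0 ≤ t) : Φ (c * t) ≤ c * Φ t := by
  simpa [hΦ0] using hΦ.2 ht Set.self_mem_Ici hc (sub_nonneg.2 hc1) (add_sub_cancel c 1)

theorem modular_le_mul_modular (hΦ : ConvexOn ℝ (Set.Ici 0) Φ) (hΦ0 : Φ 0 = 0) (hδ' : 0 < δ')
    (hδ : δ' ≤ δ) : modular Φ ν u δ ≤ ENNReal.ofReal (δ' / δ) * modular Φ ν u δ' := by
  have hδ0 : 0 < δ := hδ'.trans_le hδ
  rw [modular, modular, ← lintegral_const_mul' _ _ ENNReal.ofReal_ne_top]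
  refine lintegral_mono fun x ↦ ?_
  rw [← ENNReal.ofReal_mul (by positivity)]
  refine ENNReal.ofReal_le_ofReal ?_
  calc Φ (|u x| / δ) = Φ (δ' / δ * (|u x| / δ')) := by field_simp
    _ ≤ δ' / δ * Φ (|u x| / δ') :=
      map_mul_le_mul_map_of_convexOn hΦ hΦ0 (by positivity) ((div_le_one hδ0).2 hδ) (by positivity)

theorem modular_antitoneOn (hΦ : ConvexOn ℝ (Set.Ici 0) Φ) (hΦ0 : Φ 0 = 0) :
    AntitoneOn (modular Φ ν u) (Set.Ioi 0) := fun _ hδ' _ hδ hle ↦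
  (modular_le_mul_modular hΦ hΦ0 hδ' hle).trans <|
    mul_le_of_le_one_left' (ENNReal.ofReal_le_one.2 ((div_le_one hδ).2 hle))

theorem luxNorm_le_ofReal (hδ : 0 < δ) (h : modular Φ ν u δ ≤ 1) :
    luxNorm Φ ν u ≤ ENNReal.ofReal δ :=
  sInf_le ⟨δ, hδ, rfl, h⟩

theorem ofReal_le_luxNorm (hΦ : ConvexOn ℝ (Set.Ici 0) Φ) (hΦ0 : Φ 0 = 0)
    (h : 1 < modular Φ ν u δ) : ENNReal.ofReal δ ≤ luxNorm Φ ν u := by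
  refine le_sInf ?_
  rintro _ ⟨δ', hδ', rfl, hle⟩
  refine ENNReal.ofReal_le_ofReal (le_of_not_ge fun hδ ↦ h.not_ge ?_)
  exact (modular_antitoneOn hΦ hΦ0 hδ' (hδ'.trans_le hδ) hδ).trans hle

theorem modular_lt_one (hΦ : ConvexOn ℝ (Set.Ici 0) Φ) (hΦ0 : Φ 0 = 0)
    (h : luxNorm Φ ν u < ENNReal.ofReal δ) : modular Φ ν u δ < 1 := by
  obtain ⟨_, ⟨δ', hδ', rfl, hle⟩, hlt⟩ := sInf_lt_iff.1 h
  have hδ : δ' < δ := (ENNReal.ofReal_lt_ofReal_iff_of_nonneg hδ'.le).1 hlt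
  calc modular Φ ν u δ ≤ ENNReal.ofReal (δ' / δ) * modular Φ ν u δ' :=
        modular_le_mul_modular hΦ hΦ0 hδ' hδ.le
    _ ≤ ENNReal.ofReal (δ' / δ) := mul_le_of_le_one_right' hle
    _ < 1 := ENNReal.ofReal_lt_one.2 ((div_lt_one (hδ'.trans hδ)).2 hδ)

theorem tendsto_luxNorm_of_tendsto_modular {X' ι : Type*} [MeasurableSpace X'] {ν' : Measure X'}
    {u : ι → X → ℝ} {u' : X' → ℝ} {l : Filter ι} (hΦ : ConvexOn ℝ (Set.Ici 0) Φ) (hΦ0 : Φ 0 = 0)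
    (h : ∀ δ > 0, Tendsto (fun i ↦ modular Φ ν (u i) δ) l (𝓝 (modular Φ ν' u' δ))) :
    Tendsto (fun i ↦ luxNorm Φ ν (u i)) l (𝓝 (luxNorm Φ ν' u')) := by
  rw [tendsto_order]
  constructor
  · intro a ha
    obtain ⟨b, hab, hb⟩ := exists_between ha
    lift b to NNReal using hb.ne_top
    have hb0 : (0 : ℝ) < b := ENNReal.coe_pos.1 (pos_of_gt hab)
    rw [← ENNReal.ofReal_coe_nnreal] at hab hb
    have hlim : 1 < modular Φ ν' u' b :=
      lt_of_not_ge fun hle ↦ hb.not_ge (luxNorm_le_ofReal hb0 hle)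
    filter_upwards [(h b hb0).eventually_const_lt hlim] with i hi
    exact hab.trans_le (ofReal_le_luxNorm hΦ hΦ0 hi)
  · intro a ha
    obtain ⟨b, hb, hba⟩ := exists_between ha
    lift b to NNReal using hba.ne_top
    have hb0 : (0 : ℝ) < b := ENNReal.coe_pos.1 (pos_of_gt hb)
    rw [← ENNReal.ofReal_coe_nnreal] at hb hba
    filter_upwards [(h b hb0).eventually_lt_const (modular_lt_one hΦ hΦ0 hb)] with i hi
    exact (luxNorm_le_ofReal hb0 hi.le).trans_lt hba

end Modular

section UnitCube

variable {N : ℕ}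

instance isProbabilityMeasure_restrict_Ycube :
    IsProbabilityMeasure (volume.restrict (Ycube N)) :=
  ⟨by simp [Ycube, Real.volume_Icc_pi]⟩

theorem measurableSet_Ycube : MeasurableSet (Ycube N) := measurableSet_Icc

theorem norm_le_one_of_mem_Ycube {z : Fin N → ℝ} (hz : z ∈ Ycube N) : ‖z‖ ≤ 1 :=
  (pi_norm_le_iff_of_nonneg zero_le_one).2 fun i ↦
    (Real.norm_of_nonneg (hz.1 i)).trans_le (hz.2 i)

theorem ZPeriodic.exists_abs_le {g : (Fin N → ℝ) → ℝ} (hg : ZPeriodic g) (hgc : Continuous g) :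
    ∃ C, ∀ y, |g y| ≤ C := by
  obtain ⟨C, hC⟩ := (isCompact_Icc (a := (0 : Fin N → ℝ)) (b := 1)).exists_bound_of_continuousOn
    hgc.continuousOn
  refine ⟨C, fun y ↦ ?_⟩
  have hy : y = (fun i ↦ Int.fract (y i)) + fun i ↦ (⌊y i⌋ : ℝ) :=
    funext fun i ↦ (Int.fract_add_floor (y i)).symm
  rw [hy, hg]
  exact hC _ ⟨fun i ↦ Int.fract_nonneg _, fun i ↦ (Int.fract_lt_one _).le⟩

theorem exists_eq_intCast_of_mem_span_basisFun {v : Fin N → ℝ}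
    (hv : v ∈ Submodule.span ℤ (Set.range (Pi.basisFun ℝ (Fin N)))) :
    ∃ k : Fin N → ℤ, v = fun i ↦ (k i : ℝ) := by
  rw [Module.Basis.mem_span_iff_repr_mem] at hv
  choose k hk using hv
  exact ⟨k, funext fun i ↦ by simpa using (hk i).symm⟩

theorem setLIntegral_Ycube_const_add {f : (Fin N → ℝ) → ℝ≥0∞}
    (hf : ∀ k : Fin N → ℤ, Function.Periodic f fun i ↦ (k i : ℝ)) (a : Fin N → ℝ) :
    ∫⁻ z in Ycube N, f (a + z) = ∫⁻ z in Ycube N, f z := by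
  let b := Pi.basisFun ℝ (Fin N)
  have hcube : ZSpan.fundamentalDomain b =ᵐ[volume] Ycube N := by
    rw [ZSpan.fundamentalDomain_pi_basisFun]
    exact Measure.univ_pi_Ico_ae_eq_Icc
  have hdom := ZSpan.isAddFundamentalDomain' b volume
  have : Countable (Submodule.span ℤ (Set.range b)).toAddSubgroup :=
    inferInstanceAs (Countable (Submodule.span ℤ (Set.range b)))
  rw [← Measure.restrict_congr_set hcube,
    (measurePreserving_add_left volume a).setLIntegral_comp_emb (measurableEmbedding_addLeft a)]
  refine (hdom.vadd_of_comm a).setLIntegral_eq hdom f ?_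
  rintro ⟨v, hv⟩ x
  obtain ⟨k, rfl⟩ := exists_eq_intCast_of_mem_span_basisFun hv
  exact (congrArg f (add_comm _ x)).trans (hf k x)

end UnitCube

section Oscillation

theorem tendsto_of_forall_eventually_le_add {ι : Type*} {l : Filter ι} {u : ι → ℝ≥0∞} {a : ℝ≥0∞}
    (h : ∀ c ≠ 0, ∀ᶠ i in l, u i ≤ a + c ∧ a ≤ u i + c) : Tendsto u l (𝓝 a) := by
  rw [tendsto_order]
  constructor
  · intro b hb
    obtain ⟨c, hc, hbc⟩ := ENNReal.lt_iff_exists_add_pos_lt.1 hb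
    filter_upwards [h c (ENNReal.coe_ne_zero.2 hc.ne')] with i hi
    exact lt_of_add_lt_add_right (hbc.trans_le hi.2)
  · intro b hb
    obtain ⟨c, hc, hac⟩ := ENNReal.lt_iff_exists_add_pos_lt.1 hb
    filter_upwards [h c (ENNReal.coe_ne_zero.2 hc.ne')] with i hi
    exact hi.1.trans_lt hac

theorem lintegral_lintegral_le_add_mul {X Z : Type*} [MeasurableSpace X] [MeasurableSpace Z]
    {ν : Measure X} {κ : Measure Z} [IsProbabilityMeasure κ] {K L : X → Z → ℝ≥0∞} {B : Set X}
    (hB : MeasurableSet B) {c : ℝ≥0∞}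
    (h : ∀ x, ∀ᵐ z ∂κ, K x z ≤ L x z + B.indicator (fun _ ↦ c) x) :
    ∫⁻ x, ∫⁻ z, K x z ∂κ ∂ν ≤ ∫⁻ x, ∫⁻ z, L x z ∂κ ∂ν + c * ν B :=
  calc ∫⁻ x, ∫⁻ z, K x z ∂κ ∂ν
      ≤ ∫⁻ x, ∫⁻ z, L x z + B.indicator (fun _ ↦ c) x ∂κ ∂ν :=
        lintegral_mono fun x ↦ lintegral_mono_ae (h x)
    _ = ∫⁻ x, ∫⁻ z, L x z ∂κ + B.indicator (fun _ ↦ c) x ∂ν := by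
        simp [lintegral_add_right _ measurable_const]
    _ = ∫⁻ x, ∫⁻ z, L x z ∂κ ∂ν + c * ν B := by
        rw [lintegral_add_right _ (measurable_const.indicator hB), lintegral_indicator_const hB]

theorem lintegral_oscillating_eq_lintegral_translates {E : Type*} [AddCommGroup E] [Module ℝ E]
    [MeasurableSpace E] [MeasurableAdd₂ E] [MeasurableConstSMul ℝ E] {ρ κ : Measure E} [SFinite ρ]
    [ρ.IsAddRightInvariant] [IsProbabilityMeasure κ] {G : E → E → ℝ≥0∞}
    (hG : Measurable (Function.uncurry G)) {η : ℝ} (hη : η ≠ 0) :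
    ∫⁻ x, G x (η⁻¹ • x) ∂ρ = ∫⁻ x, ∫⁻ z, G (x + η • z) (η⁻¹ • x + z) ∂κ ∂ρ := by
  have htranslate (z : E) :
      ∫⁻ x, G (x + η • z) (η⁻¹ • x + z) ∂ρ = ∫⁻ x, G x (η⁻¹ • x) ∂ρ := by
    rw [← lintegral_add_right_eq_self (fun x ↦ G x (η⁻¹ • x)) (η • z)]
    simp only [smul_add, inv_smul_smul₀ hη]
  have hmeas : Measurable fun p : E × E ↦ G (p.1 + η • p.2) (η⁻¹ • p.1 + p.2) :=
    hG.comp ((measurable_fst.add (measurable_snd.const_smul η)).prodMk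
      ((measurable_fst.const_smul η⁻¹).add measurable_snd))
  rw [lintegral_lintegral_swap hmeas.aemeasurable]
  simp [htranslate]

theorem le_add_indicator_thickening_of_dist_lt {X Y : Type*} [PseudoMetricSpace X]
    {G : X → Y → ℝ≥0∞} {r R : ℝ} {c : ℝ≥0∞} (hr : r ≤ R)
    (hG : ∀ x x' y, dist x x' < r → G x y ≤ G x' y + c) {x a b : X} {y : Y}
    (hab : dist a b < r) (hax : dist a x < r) :
    G a y ≤ G b y + (Metric.thickening R (Function.support G)).indicator (fun _ ↦ c) x := by
  by_cases hx : x ∈ Metric.thickening R (Function.support G)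
  · simpa only [Set.indicator_of_mem hx] using hG a b y hab
  · have ha : G a = 0 := Function.notMem_support.1 fun ha ↦
      hx (Metric.mem_thickening_iff.2 ⟨a, ha, (dist_comm x a).trans_lt (hax.trans_le hr)⟩)
    simp [ha]

theorem tendsto_lintegral_oscillating {N : ℕ} {G : (Fin N → ℝ) → (Fin N → ℝ) → ℝ≥0∞}
    (hG : Measurable (Function.uncurry G))
    (hper : ∀ x, ∀ k : Fin N → ℤ, Function.Periodic (G x) fun i ↦ (k i : ℝ))
    (hsupp : Bornology.IsBounded (Function.support G))
    (hcont : ∀ c ≠ 0, ∃ r > 0, ∀ x x' y, dist x x' < r → G x y ≤ G x' y + c) :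
    Tendsto (fun η : ℝ ↦ ∫⁻ x, G x (η⁻¹ • x)) (𝓝[>] 0)
      (𝓝 (∫⁻ x, ∫⁻ z in Ycube N, G x z)) := by
  let B := Metric.thickening 1 (Function.support G)
  have hB : MeasurableSet B := Metric.isOpen_thickening.measurableSet
  have hBfin : volume B ≠ ⊤ := hsupp.thickening.measure_lt_top.ne
  refine tendsto_of_forall_eventually_le_add fun c hc ↦ ?_
  obtain ⟨c', hc', hc'B⟩ := ENNReal.exists_nnreal_pos_mul_lt hBfin hc
  obtain ⟨r, hr, hGr⟩ := hcont c' (ENNReal.coe_ne_zero.2 hc'.ne')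
  have hGr' : ∀ x x' y, dist x x' < min r 1 → G x y ≤ G x' y + c' := fun x x' y h ↦
    hGr x x' y (h.trans_le (min_le_left _ _))
  filter_upwards [Ioo_mem_nhdsGT (lt_min hr one_pos)] with η hη
  have hshift (x z : Fin N → ℝ) (hz : z ∈ Ycube N) : dist (x + η • z) x < min r 1 := by
    rw [dist_self_add_left, norm_smul, Real.norm_of_nonneg hη.1.le]
    exact (mul_le_of_le_one_right hη.1.le (norm_le_one_of_mem_Ycube hz)).trans_lt hη.2
  have hunshift : ∫⁻ x, ∫⁻ z in Ycube N, G x z = ∫⁻ x, ∫⁻ z in Ycube N, G x (η⁻¹ • x + z) :=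
    lintegral_congr fun x ↦ (setLIntegral_Ycube_const_add (hper x) _).symm
  rw [hunshift, lintegral_oscillating_eq_lintegral_translates
    (κ := volume.restrict (Ycube N)) hG hη.1.ne']
  have hforward (x : Fin N → ℝ) : ∀ᵐ z ∂volume.restrict (Ycube N),
      G (x + η • z) (η⁻¹ • x + z) ≤ G x (η⁻¹ • x + z) + B.indicator (fun _ ↦ (c' : ℝ≥0∞)) x :=
    ae_restrict_of_forall_mem measurableSet_Ycube fun z hz ↦
      le_add_indicator_thickening_of_dist_lt (min_le_right _ _) hGr' (hshift x z hz) (hshift x z hz)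
  have hbackward (x : Fin N → ℝ) : ∀ᵐ z ∂volume.restrict (Ycube N),
      G x (η⁻¹ • x + z) ≤ G (x + η • z) (η⁻¹ • x + z) + B.indicator (fun _ ↦ (c' : ℝ≥0∞)) x :=
    ae_restrict_of_forall_mem measurableSet_Ycube fun z hz ↦
      le_add_indicator_thickening_of_dist_lt (min_le_right _ _) hGr'
        ((dist_comm _ _).trans_lt (hshift x z hz)) ((dist_self x).trans_lt (hη.1.trans hη.2))
  exact ⟨(lintegral_lintegral_le_add_mul hB hforward).trans (by gcongr),
    (lintegral_lintegral_le_add_mul hB hbackward).trans (by gcongr)⟩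

end Oscillation

section AdmissibleTestFunction

variable {N : ℕ} {Ω : Type*} [MeasurableSpace Ω] {Q : Set (Fin N → ℝ)}

/-- Test functions `f(x, ω, y)` for stochastic two-scale convergence on `Q`: bounded, measurable,
`ℤ^N`-periodic in `y`, with bounded support inside `Q` in the variable `x`, and uniformly continuous
in `x`, uniformly with respect to `(ω, y)`. The support is that of the map `x ↦ f x` into functions
of `(ω, y)`. -/
structure IsAdmissible (Q : Set (Fin N → ℝ)) (f : (Fin N → ℝ) → Ω → (Fin N → ℝ) → ℝ) : Prop where
  measurable : Measurable fun p : (Fin N → ℝ) × Ω × (Fin N → ℝ) ↦ f p.1 p.2.1 p.2.2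
  exists_abs_le : ∃ C, ∀ x ω y, |f x ω y| ≤ C
  uniformEquicontinuous : UniformEquicontinuous fun (p : Ω × (Fin N → ℝ)) x ↦ f x p.1 p.2
  periodic : ∀ x ω, ZPeriodic (f x ω)
  isBounded_support : Bornology.IsBounded (Function.support f)
  support_subset : Function.support f ⊆ Q

namespace IsAdmissible

variable {f f' : (Fin N → ℝ) → Ω → (Fin N → ℝ) → ℝ}

theorem zero : IsAdmissible Q fun (_ : Fin N → ℝ) (_ : Ω) (_ : Fin N → ℝ) ↦ 0 where
  measurable := measurable_const
  exists_abs_le := ⟨0, by simp⟩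
  uniformEquicontinuous := Metric.uniformEquicontinuous_iff.2 fun e he ↦ ⟨1, one_pos, by simp [he]⟩
  periodic := fun _ _ _ _ ↦ rfl
  isBounded_support := Bornology.isBounded_empty.subset fun _ hx ↦ hx rfl
  support_subset := fun _ hx ↦ (hx rfl).elim

theorem add (hf : IsAdmissible Q f) (hf' : IsAdmissible Q f') :
    IsAdmissible Q fun x ω y ↦ f x ω y + f' x ω y where
  measurable := hf.measurable.add hf'.measurable
  exists_abs_le := by
    obtain ⟨C, hC⟩ := hf.exists_abs_le
    obtain ⟨C', hC'⟩ := hf'.exists_abs_le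
    exact ⟨C + C', fun x ω y ↦ (abs_add_le _ _).trans (add_le_add (hC x ω y) (hC' x ω y))⟩
  uniformEquicontinuous := by
    refine Metric.uniformEquicontinuous_iff.2 fun e he ↦ ?_
    obtain ⟨r, hr, H⟩ := Metric.uniformEquicontinuous_iff.1 hf.uniformEquicontinuous _ (half_pos he)
    obtain ⟨r', hr', H'⟩ :=
      Metric.uniformEquicontinuous_iff.1 hf'.uniformEquicontinuous _ (half_pos he)
    refine ⟨min r r', lt_min hr hr', fun x x' hxx' p ↦ (dist_add_add_le _ _ _ _).trans_lt ?_⟩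
    linarith [H x x' (hxx'.trans_le (min_le_left _ _)) p,
      H' x x' (hxx'.trans_le (min_le_right _ _)) p]
  periodic := fun x ω y k ↦ congrArg₂ _ (hf.periodic x ω y k) (hf'.periodic x ω y k)
  isBounded_support :=
    (hf.isBounded_support.union hf'.isBounded_support).subset (Function.support_add f f')
  support_subset :=
    (Function.support_add f f').trans (Set.union_subset hf.support_subset hf'.support_subset)

theorem sum {ι : Type*} (s : Finset ι) {F : ι → (Fin N → ℝ) → Ω → (Fin N → ℝ) → ℝ}
    (hF : ∀ i ∈ s, IsAdmissible Q (F i)) : IsAdmissible Q fun x ω y ↦ ∑ i ∈ s, F i x ω y := by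
  induction s using Finset.cons_induction with
  | empty => simpa only [Finset.sum_empty] using zero
  | cons i s hi ih =>
    simp only [Finset.sum_cons]
    exact (hF i (Finset.mem_cons_self i s)).add
      (ih fun j hj ↦ hF j (Finset.mem_cons_of_mem hj))

theorem tensor {φ : (Fin N → ℝ) → ℝ} {ψ : Ω → ℝ} {g : (Fin N → ℝ) → ℝ} (hφ : Continuous φ)
    (hφc : HasCompactSupport φ) (hφQ : tsupport φ ⊆ Q) (hψ : Measurable ψ)
    (hψb : ∃ C, ∀ ω, |ψ ω| ≤ C) (hg : Measurable g) (hgb : ∃ C, ∀ y, |g y| ≤ C)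
    (hgp : ZPeriodic g) : IsAdmissible Q fun x ω y ↦ φ x * ψ ω * g y := by
  obtain ⟨C, hC⟩ := hφc.exists_bound_of_continuous hφ
  obtain ⟨Cψ, hCψ⟩ := hψb
  obtain ⟨Cg, hCg⟩ := hgb
  have hψg (ω : Ω) (y : Fin N → ℝ) : |ψ ω * g y| ≤ |Cψ| * |Cg| := by
    rw [abs_mul]
    exact mul_le_mul ((hCψ ω).trans (le_abs_self _)) ((hCg y).trans (le_abs_self _))
      (abs_nonneg _) (abs_nonneg _)
  have hsupp : Function.support (fun x (ω : Ω) y ↦ φ x * ψ ω * g y) ⊆ tsupport φ := fun x hx ↦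
    subset_tsupport φ fun h0 ↦ hx (by ext; simp [h0])
  refine ⟨by fun_prop, ⟨C * (|Cψ| * |Cg|), fun x ω y ↦ ?_⟩, ?_, fun x ω y k ↦ ?_,
    hφc.isBounded.subset hsupp, hsupp.trans hφQ⟩
  · rw [mul_assoc, abs_mul]
    exact mul_le_mul (hC x) (hψg ω y) (abs_nonneg _) ((norm_nonneg _).trans (hC x))
  · refine Metric.uniformEquicontinuous_iff.2 fun e he ↦ ?_
    obtain ⟨r, hr, H⟩ := Metric.uniformContinuous_iff.1 (hφc.uniformContinuous_of_continuous hφ)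
      (e / (|Cψ| * |Cg| + 1)) (by positivity)
    refine ⟨r, hr, fun x x' hxx' p ↦ ?_⟩
    calc dist (φ x * ψ p.1 * g p.2) (φ x' * ψ p.1 * g p.2)
        = dist (φ x) (φ x') * |ψ p.1 * g p.2| := by
          rw [Real.dist_eq, Real.dist_eq, ← abs_mul]
          ring_nf
      _ ≤ dist (φ x) (φ x') * (|Cψ| * |Cg| + 1) := by
          gcongr
          exact (hψg _ _).trans (le_add_of_nonneg_right zero_le_one)
      _ < e := (lt_div_iff₀ (by positivity)).1 (H hxx')
  · simp only [hgp y k]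

theorem continuous_comp {h : ℝ → ℝ} (hf : IsAdmissible Q f) (hh : Continuous h) (h0 : h 0 = 0) :
    IsAdmissible Q fun x ω y ↦ h (f x ω y) := by
  obtain ⟨C, hC⟩ := hf.exists_abs_le
  have hmem (x ω y) : f x ω y ∈ Set.Icc (-C) C := abs_le.1 (hC x ω y)
  have hsupp : Function.support (fun x ω y ↦ h (f x ω y)) ⊆ Function.support f := fun x hx hfx ↦
    hx (by ext; simp [hfx, h0])
  refine ⟨hh.measurable.comp hf.measurable, ?_, ?_, fun x ω y k ↦ ?_,
    hf.isBounded_support.subset hsupp, hsupp.trans hf.support_subset⟩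
  · obtain ⟨C', hC'⟩ :=
      isCompact_Icc.exists_bound_of_continuousOn (hh.continuousOn (s := Set.Icc (-C) C))
    exact ⟨C', fun x ω y ↦ hC' _ (hmem x ω y)⟩
  · refine Metric.uniformEquicontinuous_iff.2 fun e he ↦ ?_
    obtain ⟨d, hd, H⟩ := Metric.uniformContinuousOn_iff.1
      (isCompact_Icc.uniformContinuousOn_of_continuous (hh.continuousOn (s := Set.Icc (-C) C))) e he
    obtain ⟨r, hr, Hr⟩ := Metric.uniformEquicontinuous_iff.1 hf.uniformEquicontinuous d hd
    exact ⟨r, hr, fun x x' hxx' p ↦ H _ (hmem _ _ _) _ (hmem _ _ _) (Hr x x' hxx' p)⟩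
  · simp only [hf.periodic x ω y k]

end IsAdmissible

section Mean

variable {X Y : Type*} {μ : Measure Ω} {f : X → Ω → Y → ℝ}

/-- The `ω`-average `G(x, y) = ∫ f(x, ω, y)⁺ dμ(ω)` of the positive part of `f`. It is the function
of `(x, y)` that remains once the dynamical system has been integrated out. -/
def lmean (μ : Measure Ω) (f : X → Ω → Y → ℝ) (x : X) (y : Y) : ℝ≥0∞ :=
  ∫⁻ ω, ENNReal.ofReal (f x ω y) ∂μ

theorem support_lmean_subset : Function.support (lmean μ f) ⊆ Function.support f :=
  fun x hx hfx ↦ hx (by ext; simp [lmean, hfx])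

theorem lmean_le_lmean_add {e : ℝ} {x x' : X} {y : Y} (h : ∀ ω, dist (f x ω y) (f x' ω y) ≤ e) :
    lmean μ f x y ≤ lmean μ f x' y + ENNReal.ofReal e * μ Set.univ := by
  rw [lmean, lmean, ← lintegral_const, ← lintegral_add_right _ measurable_const]
  refine lintegral_mono fun ω ↦ (ENNReal.ofReal_le_ofReal ?_).trans ENNReal.ofReal_add_le
  linarith [(abs_le.1 (h ω)).2]

end Mean

namespace IsAdmissible

variable {μ : Measure Ω} {f : (Fin N → ℝ) → Ω → (Fin N → ℝ) → ℝ}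

theorem measurable_lmean [SFinite μ] (hf : IsAdmissible Q f) :
    Measurable (Function.uncurry (lmean μ f)) :=
  (hf.measurable.comp (measurable_fst.fst.prodMk
    (measurable_snd.prodMk measurable_fst.snd))).ennreal_ofReal.lintegral_prod_right'

theorem tendsto_lintegral_lmean [IsFiniteMeasure μ] (hf : IsAdmissible Q f) :
    Tendsto (fun η : ℝ ↦ ∫⁻ x, lmean μ f x (η⁻¹ • x)) (𝓝[>] 0)
      (𝓝 (∫⁻ x, ∫⁻ y in Ycube N, lmean μ f x y)) := by
  refine tendsto_lintegral_oscillating hf.measurable_lmean (fun x k y ↦ ?_)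
    (hf.isBounded_support.subset support_lmean_subset) fun c hc ↦ ?_
  · simp only [lmean, hf.periodic x _ y k]
  · obtain ⟨e, he, hec⟩ := ENNReal.exists_nnreal_pos_mul_lt (measure_ne_top μ Set.univ) hc
    obtain ⟨r, hr, H⟩ := Metric.uniformEquicontinuous_iff.1 hf.uniformEquicontinuous e he
    refine ⟨r, hr, fun x x' y hxx' ↦ ?_⟩
    calc lmean μ f x y ≤ lmean μ f x' y + ENNReal.ofReal e * μ Set.univ :=
          lmean_le_lmean_add fun ω ↦ (H x x' hxx' (ω, y)).le
      _ ≤ lmean μ f x' y + c := by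
          rw [ENNReal.ofReal_coe_nnreal]
          gcongr

theorem lintegral_prod_comp_eq_lintegral_lmean [SFinite μ] (hf : IsAdmissible Q f)
    {τ : (Fin N → ℝ) → Ω → Ω} (hτ : ∀ x, MeasurePreserving (τ x) μ μ)
    (hτm : Measurable fun p : (Fin N → ℝ) × Ω ↦ τ p.1 p.2) {s : (Fin N → ℝ) → Fin N → ℝ}
    (hs : Measurable s) :
    ∫⁻ p, ENNReal.ofReal (f p.1 (τ p.1 p.2) (s p.1)) ∂((volume.restrict Q).prod μ) =
      ∫⁻ x, lmean μ f x (s x) := by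
  have hmeas : Measurable fun p : (Fin N → ℝ) × Ω ↦ ENNReal.ofReal (f p.1 (τ p.1 p.2) (s p.1)) :=
    (hf.measurable.comp (measurable_fst.prodMk
      (hτm.prodMk (hs.comp measurable_fst)))).ennreal_ofReal
  have hsupp : (Function.support fun x ↦ lmean μ f x (s x)) ⊆ Q := fun x hx ↦
    hf.support_subset (support_lmean_subset (μ := μ) fun h0 ↦ hx (by simp [h0]))
  rw [lintegral_prod _ hmeas.aemeasurable, ← setLIntegral_eq_of_support_subset hsupp]
  refine lintegral_congr fun x ↦
    (hτ x).lintegral_comp (f := fun ω ↦ ENNReal.ofReal (f x ω (s x))) ?_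
  exact (hf.measurable.comp (measurable_const.prodMk
    (measurable_id.prodMk measurable_const))).ennreal_ofReal

theorem lintegral_prod_prod_eq_lintegral_lmean [SFinite μ] (hf : IsAdmissible Q f)
    (κ : Measure (Fin N → ℝ)) [SFinite κ] :
    ∫⁻ p, ENNReal.ofReal (f p.1.1 p.1.2 p.2) ∂(((volume.restrict Q).prod μ).prod κ) =
      ∫⁻ x, ∫⁻ y, lmean μ f x y ∂κ := by
  have hmeas : Measurable fun p : ((Fin N → ℝ) × Ω) × (Fin N → ℝ) ↦
      ENNReal.ofReal (f p.1.1 p.1.2 p.2) :=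
    (hf.measurable.comp (measurable_fst.fst.prodMk
      (measurable_fst.snd.prodMk measurable_snd))).ennreal_ofReal
  have hsupp : (Function.support fun x ↦ ∫⁻ y, lmean μ f x y ∂κ) ⊆ Q := fun x hx ↦
    hf.support_subset (support_lmean_subset (μ := μ) fun h0 ↦ hx (by simp [h0]))
  rw [lintegral_prod _ hmeas.aemeasurable,
    lintegral_prod _ hmeas.lintegral_prod_right'.aemeasurable,
    ← setLIntegral_eq_of_support_subset hsupp]
  refine lintegral_congr fun x ↦ lintegral_lintegral_swap ?_
  exact (hf.measurable.comp (measurable_const.prodMk measurable_id)).ennreal_ofReal.aemeasurable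

theorem tendsto_lintegral [IsFiniteMeasure μ] (hf : IsAdmissible Q f)
    {T : (Fin N → ℝ) → Ω → Ω} (hT : ∀ x, MeasurePreserving (T x) μ μ)
    (hTm : Measurable fun p : (Fin N → ℝ) × Ω ↦ T p.1 p.2) :
    Tendsto
      (fun ε : ℝ ↦ ∫⁻ p, ENNReal.ofReal (f p.1 (T (ε⁻¹ • p.1) p.2) ((ε ^ 2)⁻¹ • p.1))
        ∂((volume.restrict Q).prod μ))
      (𝓝[>] 0)
      (𝓝 (∫⁻ p, ENNReal.ofReal (f p.1.1 p.1.2 p.2)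
        ∂(((volume.restrict Q).prod μ).prod (volume.restrict (Ycube N))))) := by
  have hosc (ε : ℝ) := hf.lintegral_prod_comp_eq_lintegral_lmean (τ := fun x ↦ T (ε⁻¹ • x))
    (s := fun x ↦ (ε ^ 2)⁻¹ • x) (fun x ↦ hT _)
    (hTm.comp ((measurable_fst.const_smul ε⁻¹).prodMk measurable_snd)) (measurable_const_smul _)
  have hsq : Tendsto (fun ε : ℝ ↦ ε ^ 2) (𝓝[>] 0) (𝓝[>] 0) :=
    tendsto_nhdsWithin_iff.2 ⟨((continuous_pow 2).tendsto' 0 0 (by simp)).mono_left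
      nhdsWithin_le_nhds, eventually_mem_nhdsWithin.mono fun ε hε ↦ Set.mem_Ioi.2 (pow_pos hε 2)⟩
  simp only [hosc, hf.lintegral_prod_prod_eq_lintegral_lmean]
  exact hf.tendsto_lintegral_lmean.comp hsq

end IsAdmissible

end AdmissibleTestFunction

theorem stmt2_general {N : ℕ} {Ω : Type*} [MeasurableSpace Ω] {μ : Measure Ω} [IsFiniteMeasure μ]
    {Φ : ℝ → ℝ} (hΦc : ContinuousOn Φ (Set.Ici 0)) (hΦ : ConvexOn ℝ (Set.Ici 0) Φ)
    (hΦ0 : Φ 0 = 0) {T : (Fin N → ℝ) → Ω → Ω} (hT : ∀ x, MeasurePreserving (T x) μ μ)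
    (hTm : Measurable fun p : (Fin N → ℝ) × Ω ↦ T p.1 p.2) {Q : Set (Fin N → ℝ)}
    {f : (Fin N → ℝ) → Ω → (Fin N → ℝ) → ℝ} (hf : IsAdmissible Q f) :
    Tendsto
      (fun ε : ℝ ↦ luxNorm Φ ((volume.restrict Q).prod μ)
        (fun p ↦ f p.1 (T (ε⁻¹ • p.1) p.2) ((ε ^ 2)⁻¹ • p.1)))
      (𝓝[>] 0)
      (𝓝 (luxNorm Φ (((volume.restrict Q).prod μ).prod (volume.restrict (Ycube N)))
        (fun p ↦ f p.1.1 p.1.2 p.2))) := by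
  refine tendsto_luxNorm_of_tendsto_modular hΦ hΦ0 fun δ hδ ↦ ?_
  have hcont : Continuous fun t : ℝ ↦ Φ (|t| / δ) :=
    hΦc.comp_continuous (by fun_prop) fun t ↦ div_nonneg (abs_nonneg t) hδ.le
  exact (hf.continuous_comp hcont (by simp [hΦ0])).tendsto_lintegral hT hTm

/-- convergence of Luxemburg norms of oscillating test functions. -/
theorem stmt2 {N : ℕ} (hN : 1 ≤ N) {Ω : Type*} [MeasurableSpace Ω] (μ : Measure Ω)
    [IsProbabilityMeasure μ]
    (Φ : ℝ → ℝ) (hΦ : IsYoung Φ) (hΦ2 : Delta2 Φ) (hΦc2 : Delta2 (conjY Φ))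
    (T : (Fin N → ℝ) → Ω → Ω) (hT : IsDynSys μ T)
    (Q : Set (Fin N → ℝ)) (hQo : IsOpen Q) (hQb : Bornology.IsBounded Q)
    (m : ℕ) (φ : Fin m → (Fin N → ℝ) → ℝ) (ψ : Fin m → Ω → ℝ)
    (g : Fin m → (Fin N → ℝ) → ℝ)
    (hφ : ∀ i, ContDiff ℝ (⊤ : ℕ∞) (φ i) ∧ HasCompactSupport (φ i) ∧ tsupport (φ i) ⊆ Q)
    (hψ : ∀ i, Measurable (ψ i) ∧ ∃ C : ℝ, ∀ ω, |ψ i ω| ≤ C)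
    (hg : ∀ i, Continuous (g i) ∧ ZPeriodic (g i)) :
    Tendsto
      (fun ε : ℝ =>
        luxNorm Φ ((volume.restrict Q).prod μ)
          (fun p => ∑ i, φ i p.1 * ψ i (T (ε⁻¹ • p.1) p.2) * g i ((ε ^ 2)⁻¹ • p.1)))
      (nhdsWithin 0 (Set.Ioi 0))
      (nhds (luxNorm Φ (((volume.restrict Q).prod μ).prod (volume.restrict (Ycube N)))
        (fun p => ∑ i, φ i p.1.1 * ψ i p.1.2 * g i p.2))) := by
  have hf : IsAdmissible Q fun x ω y ↦ ∑ i, φ i x * ψ i ω * g i y :=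
    .sum _ fun i _ ↦ .tensor (hφ i).1.continuous (hφ i).2.1 (hφ i).2.2 (hψ i).1 (hψ i).2
      (hg i).1.measurable ((hg i).2.exists_abs_le (hg i).1) (hg i).2
  exact (stmt2_general hΦ.1 hΦ.2.1 hΦ.2.2.1 hT.2.2.1 hT.2.2.2 hf :)
end
end
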